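/- Tamper sets are overapproximated by tamper places: let D = C(t,p,φ,e) be the data flow semantics of a Copland phrase. If π = ⟨v1,…,vn⟩ is a path of D starting with a measurement event, then ts(π) ⊆ τ(ε(vn)). -/

import Mathlib

namespace Copland

/-- Places are drawn from a countable set. -/
abbrev Place := ℕ
/-- Symbols (measurement/target identifiers) are drawn from a countable set. -/
abbrev Symb := ℕ

/-- Splitting specifications: `+` or `-`. -/
inductive Split where
  | plus
  | minus
deriving DecidableEq, Repr

/-- Copland phrases. -/
inductive Phrase where
  | meas : Symb → Place → Symb → Phrase          -- measurement  m q s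
  | att  : Place → Phrase → Phrase               -- @_q [ t ]
  | copy : Phrase                                 -- _
  | sign : Phrase                                 -- !
  | hash : Phrase                                 -- #
  | lseq : Phrase → Phrase → Phrase               -- t1 → t2
  | bseq : Split → Split → Phrase → Phrase → Phrase  -- t1 d1<d2 t2
  | bpar : Split → Split → Phrase → Phrase → Phrase  -- t1 d1~d2 t2
deriving DecidableEq, Repr

/-- Evidence terms. -/
inductive Evidence where
  | empty : Evidence                                          -- ξ
  | meas : Symb → Place → Symb → Place → List ℕ → Evidence → Evidence  -- m(ms(m,q,s),p,φ,e)
  | sig  : Evidence → Place → Evidence                        -- [[e]]_p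
  | hash : Evidence → Place → Evidence                        -- #{e}_p
  | seqc : Evidence → Evidence → Evidence                     -- e1 ;; e2
  | parc : Evidence → Evidence → Evidence                     -- e1 || e2
deriving DecidableEq, Repr

/-- The effect `d(e)` of a splitting specification on evidence. -/
def splitEv : Split → Evidence → Evidence
  | .plus, e => e
  | .minus, _ => .empty

/-- The Copland evidence semantics `E(t,p,φ,e)`. -/
def eval : Phrase → Place → List ℕ → Evidence → Evidence
  | .meas m q s, p, φ, e => .meas m q s p φ e
  | .copy, _, _, e => e
  | .sign, p, _, e => .sig e p
  | .hash, p, _, e => .hash e p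
  | .att q t, _, φ, e => eval t q (1 :: φ) e
  | .lseq t1 t2, p, φ, e => eval t2 p (2 :: φ) (eval t1 p (1 :: φ) e)
  | .bseq d1 d2 t1 t2, p, φ, e =>
      .seqc (eval t1 p (1 :: φ) (splitEv d1 e)) (eval t2 p (2 :: φ) (splitEv d2 e))
  | .bpar d1 d2 t1 t2, p, φ, e =>
      .parc (eval t1 p (1 :: φ) (splitEv d1 e)) (eval t2 p (2 :: φ) (splitEv d2 e))

/-- Join operators: sequential `<` or parallel `~`. -/
inductive JoinOp where
  | seqJ
  | parJ
deriving DecidableEq, Repr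

/-- Event labels. -/
inductive Label where
  | msp   : Place → Evidence → Label                    -- p : msp(e)
  | cpy   : Place → Evidence → Label                    -- p : cpy(e)
  | sig   : Place → Evidence → Label                    -- p : sig(e)
  | hsh   : Place → Evidence → Label                    -- p : hsh(e)
  | req   : Place → Place → Evidence → Label            -- p : req(q,e)
  | rpy   : Place → Place → Evidence → Label            -- p : rpy(q,e)
  | split : Place → Split → Split → Evidence → Label    -- p : split(d1,d2,e)
  | join  : Place → JoinOp → Evidence → Label           -- p : join(o,e)
deriving DecidableEq, Repr

/-- The (sending) place `ϱ(v)`: the place before the colon in the label. -/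
def Label.place : Label → Place
  | .msp p _ => p
  | .cpy p _ => p
  | .sig p _ => p
  | .hsh p _ => p
  | .req p _ _ => p
  | .rpy p _ _ => p
  | .split p _ _ _ => p
  | .join p _ _ => p

/-- The receiving place `ϱ'(v)`. -/
def Label.recvPlace : Label → Place
  | .req _ q _ => q
  | .rpy _ q _ => q
  | l => l.place

/-- The evidence `ε(v)`: the last argument of the label. -/
def Label.evid : Label → Evidence
  | .msp _ e => e
  | .cpy _ e => e
  | .sig _ e => e
  | .hsh _ e => e
  | .req _ _ e => e
  | .rpy _ _ e => e
  | .split _ _ _ e => e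
  | .join _ _ e => e

/-- A measurement event is one whose label has the form `p : msp(e)`. -/
def Label.IsMeas (l : Label) : Prop := ∃ p e, l = .msp p e

/-- A cross-place communication event is one with `ϱ(v) ≠ ϱ'(v)`. -/
def Label.IsCross (l : Label) : Prop := l.place ≠ l.recvPlace

/-- A data flow graph: events are the naturals `0, …, n-1`, with an input event,
an output event, flow edges, and a labeling. -/
structure DFG where
  n : ℕ
  vin : ℕ
  vout : ℕ
  edges : List (ℕ × ℕ)
  label : ℕ → Label

namespace DFG

/-- Well-formedness of a data flow graph: events are in range, the flow
relation is acyclic, and there is no edge into the input event nor out of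
the output event. -/
def WF (G : DFG) : Prop :=
  G.vin < G.n ∧ G.vout < G.n ∧
  (∀ pr ∈ G.edges, pr.1 < G.n ∧ pr.2 < G.n) ∧
  (∀ v, ¬ Relation.TransGen (fun a b => (a, b) ∈ G.edges) v v) ∧
  (∀ pr ∈ G.edges, pr.2 ≠ G.vin ∧ pr.1 ≠ G.vout)

/-- The single-event data flow graph. -/
def single (l : Label) : DFG :=
  { n := 1, vin := 0, vout := 0, edges := [], label := fun _ => l }

/-- Before-copy composition: the second graph's events are renumbered after the
first's, and a flow edge links the output of the first to the input of the second. -/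
def seqComp (G1 G2 : DFG) : DFG :=
  { n := G1.n + G2.n
    vin := G1.vin
    vout := G1.n + G2.vout
    edges := G1.edges ++ G2.edges.map (fun pr => (G1.n + pr.1, G1.n + pr.2)) ++
      [(G1.vout, G1.n + G2.vin)]
    label := fun i => if i < G1.n then G1.label i else G2.label (i - G1.n) }

/-- Branching composition: a split event, the two subgraphs (with a flow edge from
the split into the input of a subgraph exactly when the corresponding splitting
specification is `+`), and a join event receiving flow from both outputs. -/
def branch (sp jn : Label) (d1 d2 : Split) (G1 G2 : DFG) : DFG :=
  { n := G1.n + G2.n + 2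
    vin := 0
    vout := G1.n + G2.n + 1
    edges :=
      G1.edges.map (fun pr => (pr.1 + 1, pr.2 + 1)) ++
      G2.edges.map (fun pr => (pr.1 + 1 + G1.n, pr.2 + 1 + G1.n)) ++
      (if d1 = Split.plus then [(0, G1.vin + 1)] else []) ++
      (if d2 = Split.plus then [(0, G2.vin + 1 + G1.n)] else []) ++
      [(G1.vout + 1, G1.n + G2.n + 1), (G2.vout + 1 + G1.n, G1.n + G2.n + 1)]
    label := fun i =>
      if i = 0 then sp
      else if i < G1.n + 1 then G1.label (i - 1)
      else if i < G1.n + G2.n + 1 then G2.label (i - 1 - G1.n)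
      else jn }

end DFG

/-- The Copland data flow semantics `C(t,p,φ,e)`. -/
def sem : Phrase → Place → List ℕ → Evidence → DFG
  | .meas m q s, p, φ, e => .single (.msp p (.meas m q s p φ e))
  | .copy, p, _, e => .single (.cpy p e)
  | .sign, p, _, e => .single (.sig p (.sig e p))
  | .hash, p, _, e => .single (.hsh p (.hash e p))
  | .att q t, p, φ, e =>
      (DFG.single (.req p q e)).seqComp
        ((sem t q (1 :: φ) e).seqComp (.single (.rpy q p (eval t q (1 :: φ) e))))
  | .lseq t1 t2, p, φ, e =>
      (sem t1 p (1 :: φ) e).seqComp (sem t2 p (2 :: φ) (eval t1 p (1 :: φ) e))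
  | .bseq d1 d2 t1 t2, p, φ, e =>
      DFG.branch (.split p d1 d2 e)
        (.join p .seqJ (eval (.bseq d1 d2 t1 t2) p φ e)) d1 d2
        (sem t1 p (1 :: φ) (splitEv d1 e)) (sem t2 p (2 :: φ) (splitEv d2 e))
  | .bpar d1 d2 t1 t2, p, φ, e =>
      DFG.branch (.split p d1 d2 e)
        (.join p .parJ (eval (.bpar d1 d2 t1 t2) p φ e)) d1 d2
        (sem t1 p (1 :: φ) (splitEv d1 e)) (sem t2 p (2 :: φ) (splitEv d2 e))

namespace DFG

/-- A path of a data flow graph: a nonempty sequence of events of the graph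
successively related by flow edges. -/
def IsPath (G : DFG) (π : List ℕ) : Prop :=
  π ≠ [] ∧ (∀ v ∈ π, v < G.n) ∧ π.Chain' (fun a b => (a, b) ∈ G.edges)

/-- One step of the tamper set computation. -/
def tsStep (G : DFG) (s : Set Place) (v : ℕ) : Set Place :=
  match G.label v with
  | .sig p _ => {p} ∩ s
  | _ => s

/-- The tamper set `ts(π)` of a path: `ts(⟨v⟩)` is the set of all places if `v` is a
measurement event and `∅` otherwise; `ts(π § v) = {p} ∩ ts(π)` if `ℓ(v) = p:sig(e)`,
and `ts(π § v) = ts(π)` otherwise. -/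
def ts (G : DFG) (π : List ℕ) : Set Place :=
  match π with
  | [] => ∅
  | v :: rest =>
      rest.foldl (tsStep G)
        (match G.label v with
          | .msp _ _ => Set.univ
          | _ => ∅)

/-- A path is `p`-signing iff every signature event on it occurs at `p`. -/
def Signing (G : DFG) (π : List ℕ) (p : Place) : Prop :=
  ∀ v ∈ π, ∀ q e, G.label v = .sig q e → q = p

/-- A path `π = ⟨v, …, v'⟩` permits tampering (at `v'` with the evidence from `v`)
iff (1) `v` is a measurement event, (2) the length of `π` exceeds 1, and
(3) `π` is `ϱ(v')`-signing or `ϱ'(v')`-signing. -/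
def PermitsTamper (G : DFG) (π : List ℕ) : Prop :=
  (∀ v, π.head? = some v → (G.label v).IsMeas) ∧
  1 < π.length ∧
  (∀ v', π.getLast? = some v' →
    G.Signing π (G.label v').place ∨ G.Signing π (G.label v').recvPlace)

/-- A path `⟨v1,…,vn⟩` is local to place `p` iff every interior event has both
sending and receiving place `p`, and each endpoint has sending or receiving place `p`. -/
def LocalTo (G : DFG) (π : List ℕ) (p : Place) : Prop :=
  (∀ i v, 0 < i → i + 1 < π.length → π[i]? = some v →
      (G.label v).place = p ∧ (G.label v).recvPlace = p) ∧
  (∀ v, π.head? = some v → (G.label v).place = p ∨ (G.label v).recvPlace = p) ∧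
  (∀ v, π.getLast? = some v → (G.label v).place = p ∨ (G.label v).recvPlace = p)

/-- `π` is a path of `G` from `v` to `v'`. -/
def PathBetween (G : DFG) (v v' : ℕ) (π : List ℕ) : Prop :=
  G.IsPath π ∧ π.head? = some v ∧ π.getLast? = some v'

/-- A set `S` of events of `G` is a tamper strategy for `v` iff every path from `v`
to the output event of `G` contains an event `v' ∈ S` such that the prefix
`⟨v, …, v'⟩` of the path permits tampering. -/
def TamperStrategy (G : DFG) (S : Set ℕ) (v : ℕ) : Prop :=
  (∀ w ∈ S, w < G.n) ∧
  ∀ π, G.PathBetween v G.vout π →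
    ∃ v' ∈ S, ∃ π', π' <+: π ∧ π'.getLast? = some v' ∧ G.PermitsTamper π'

/-- `S` is a minimal tamper strategy for `v` iff it is a tamper strategy for `v` and
every tamper strategy for `v` included in `S` equals `S`. -/
def MinimalTamperStrategy (G : DFG) (S : Set ℕ) (v : ℕ) : Prop :=
  G.TamperStrategy S v ∧ ∀ S', G.TamperStrategy S' v → S' ⊆ S → S' = S

/-- A path `π = ⟨v1,…,vn⟩` is protected iff either `v1` is not a measurement event,
or for every `1 < i ≤ n`, if `vi` is a cross-place communication event then
`ts(⟨v1,…,vi⟩) ⊆ {ϱ(vi)}`. -/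
def ProtectedPath (G : DFG) (π : List ℕ) : Prop :=
  (∀ v, π.head? = some v → ¬ (G.label v).IsMeas) ∨
  (∀ i v, 0 < i → i < π.length → π[i]? = some v → (G.label v).IsCross →
      G.ts (π.take (i + 1)) ⊆ {(G.label v).place})

/-- A data flow graph is protected iff all of its paths are protected. -/
def Protected (G : DFG) : Prop :=
  ∀ π, G.IsPath π → G.ProtectedPath π

end DFG

/-- The tamper places function `τ` on evidence. -/
def tau : Evidence → Set Place
  | .empty => ∅
  | .meas _ _ _ _ _ _ => Set.univ
  | .hash e _ => tau e
  | .sig e p => {p} ∩ tau e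
  | .seqc e1 e2 => tau e1 ∪ tau e2
  | .parc e1 e2 => tau e1 ∪ tau e2

open scoped Classical in
/-- The Evidence Protection Program `epp(t,p,e)`. -/
noncomputable def epp : Phrase → Place → Evidence → Phrase
  | .meas m q s, _, _ => .meas m q s
  | .copy, _, _ => .copy
  | .sign, _, _ => .sign
  | .hash, _, _ => .hash
  | .lseq t1 t2, p, e =>
      .lseq (epp t1 p e) (epp t2 p (eval (epp t1 p e) p [] e))
  | .att q t, p, e =>
      if q = p then .att q (epp t p e)
      else if tau e ⊆ {p} then
        if tau (eval (epp t q e) q [] e) ⊆ {q} then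
          .att q (epp t q e)
        else
          .att q (.lseq (epp t q e) .sign)
      else
        if tau (eval (epp t q (.sig e p)) q [] (.sig e p)) ⊆ {q} then
          .lseq .sign (.att q (epp t q (.sig e p)))
        else
          .lseq .sign (.att q (.lseq (epp t q (.sig e p)) .sign))
  | .bseq d1 d2 t1 t2, p, e =>
      .bseq d1 d2 (epp t1 p (splitEv d1 e)) (epp t2 p (splitEv d2 e))
  | .bpar d1 d2 t1 t2, p, e =>
      .bpar d1 d2 (epp t1 p (splitEv d1 e)) (epp t2 p (splitEv d2 e))

end Copland

/-!
Measurement events carry evidence whose tamper places are all places, and across a flow edge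
`u → v` the tamper places of `ε(u)`, cut down to `{p}` when `v` is a signature at `p`, are contained
in those of `ε(v)`. Hence the tamper set of a path stays inside the tamper places of the last event,
by induction on the path. The edge property itself is proved by induction on the phrase; the
invariant that makes subgraphs fit together is that the graph of `C(t,p,φ,e)` receives `e` at its
input event and carries `E(t,p,φ,e)` at its output event.
-/

namespace Copland

namespace Label

/-- The tamper set of a one-event path whose event has this label. -/
def initTamper : Label → Set Place
  | .msp _ _ => Set.univ
  | _ => ∅

/-- The tamper set of `π § v` as a function of that of `π`, where `v` has this label. -/
def stepTamper : Label → Set Place → Set Place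
  | .sig p _, s => {p} ∩ s
  | _, s => s

theorem stepTamper_mono (l : Label) : Monotone l.stepTamper := by
  intro s s' h
  cases l with
  | sig p e => exact Set.inter_subset_inter_right {p} h
  | _ => exact h

end Label

namespace DFG

variable {G G1 G2 : DFG}

theorem ts_singleton (v : ℕ) : G.ts [v] = (G.label v).initTamper := by
  simp only [ts, List.foldl_nil]
  cases G.label v <;> rfl

theorem tsStep_eq_stepTamper (s : Set Place) (v : ℕ) :
    G.tsStep s v = (G.label v).stepTamper s := by
  unfold tsStep
  cases G.label v <;> rfl

theorem ts_append_singleton {π : List ℕ} (hπ : π ≠ []) (v : ℕ) :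
    G.ts (π ++ [v]) = (G.label v).stepTamper (G.ts π) := by
  obtain ⟨u, rest, rfl⟩ := List.exists_cons_of_ne_nil hπ
  simp only [ts, List.cons_append, List.foldl_append, List.foldl_cons, List.foldl_nil,
    tsStep_eq_stepTamper]

/-- The input event, the output event and the endpoints of all flow edges are events of `G`. -/
structure Bounded (G : DFG) : Prop where
  vin_lt : G.vin < G.n
  vout_lt : G.vout < G.n
  edge_lt : ∀ u v, (u, v) ∈ G.edges → u < G.n ∧ v < G.n

/-- Local soundness of evidence labels with respect to tamper sets, for a graph that receives
evidence `ein` at its input event and carries `eout` at its output event. The field `source` ranges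
over all naturals, hence also over those that are not events of `G`. -/
structure TauSound (G : DFG) (ein eout : Evidence) : Prop extends G.Bounded where
  source : ∀ v, (G.label v).initTamper ⊆ tau (G.label v).evid
  edge : ∀ u v, (u, v) ∈ G.edges →
    (G.label v).stepTamper (tau (G.label u).evid) ⊆ tau (G.label v).evid
  input : (G.label G.vin).stepTamper (tau ein) ⊆ tau (G.label G.vin).evid
  output : (G.label G.vout).evid = eout

theorem TauSound.ts_subset {ein eout : Evidence} (hG : G.TauSound ein eout) {π : List ℕ}
    (hπ : π.IsChain fun u v => (u, v) ∈ G.edges) {vn : ℕ} (hvn : π.getLast? = some vn) :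
    G.ts π ⊆ tau (G.label vn).evid := by
  induction π using List.reverseRecOn generalizing vn with
  | nil => cases hvn
  | append_singleton π v ih =>
    obtain rfl : v = vn := by simpa only [List.getLast?_concat, Option.some_inj] using hvn
    rcases eq_or_ne π [] with rfl | hne
    · exact (ts_singleton v).trans_subset (hG.source v)
    · obtain ⟨hchain, -, hedge⟩ := List.isChain_append.1 hπ
      have hu := List.getLast?_eq_some_getLast hne
      calc G.ts (π ++ [v])
          = (G.label v).stepTamper (G.ts π) := ts_append_singleton hne v
        _ ⊆ (G.label v).stepTamper (tau (G.label (π.getLast hne)).evid) :=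
            (G.label v).stepTamper_mono (ih hchain hu)
        _ ⊆ tau (G.label v).evid := hG.edge _ v (hedge _ hu v rfl)

theorem TauSound.single {l : Label} {ein : Evidence} (hinit : l.initTamper ⊆ tau l.evid)
    (hstep : l.stepTamper (tau ein) ⊆ tau l.evid) : (DFG.single l).TauSound ein l.evid where
  vin_lt := Nat.one_pos
  vout_lt := Nat.one_pos
  edge_lt _ _ huv := (List.not_mem_nil huv).elim
  source _ := hinit
  edge _ _ huv := (List.not_mem_nil huv).elim
  input := hstep
  output := rfl

section SeqComp

theorem seqComp_label_left {i : ℕ} (hi : i < G1.n) :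
    (G1.seqComp G2).label i = G1.label i := if_pos hi

theorem seqComp_label_right (i : ℕ) : (G1.seqComp G2).label (G1.n + i) = G2.label i := by
  simp [seqComp]

theorem forall_mem_edges_seqComp {P : ℕ → ℕ → Prop} :
    (∀ u v, (u, v) ∈ (G1.seqComp G2).edges → P u v) ↔
      (∀ u v, (u, v) ∈ G1.edges → P u v) ∧
      (∀ u v, (u, v) ∈ G2.edges → P (G1.n + u) (G1.n + v)) ∧
      P G1.vout (G1.n + G2.vin) := by
  simp only [seqComp, List.mem_append, List.mem_map, List.mem_singleton, Prod.exists,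
    Prod.mk.injEq]
  grind

theorem Bounded.seqComp (h1 : G1.Bounded) (h2 : G2.Bounded) : (G1.seqComp G2).Bounded where
  vin_lt := Nat.lt_add_right _ h1.vin_lt
  vout_lt := Nat.add_lt_add_left h2.vout_lt _
  edge_lt := forall_mem_edges_seqComp.2
    ⟨fun u v huv => (h1.edge_lt u v huv).imp (Nat.lt_add_right _) (Nat.lt_add_right _),
      fun u v huv => (h2.edge_lt u v huv).imp
        (Nat.add_lt_add_left · _) (Nat.add_lt_add_left · _),
      Nat.lt_add_right _ h1.vout_lt, Nat.add_lt_add_left h2.vin_lt _⟩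

theorem TauSound.seqComp {e1 e2 e3 : Evidence} (h1 : G1.TauSound e1 e2)
    (h2 : G2.TauSound e2 e3) : (G1.seqComp G2).TauSound e1 e3 where
  toBounded := h1.toBounded.seqComp h2.toBounded
  source v := by
    simp only [DFG.seqComp]
    split_ifs
    exacts [h1.source _, h2.source _]
  edge := by
    refine forall_mem_edges_seqComp.2 ⟨fun u v huv => ?_, fun u v huv => ?_, ?_⟩
    · obtain ⟨hu, hv⟩ := h1.edge_lt u v huv
      simpa only [seqComp_label_left hu, seqComp_label_left hv] using h1.edge u v huv
    · simpa only [seqComp_label_right] using h2.edge u v huv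
    · simpa only [seqComp_label_left h1.vout_lt, seqComp_label_right, h1.output] using h2.input
  input := (seqComp_label_left (G2 := G2) h1.vin_lt).symm ▸ h1.input
  output := (congrArg Label.evid (seqComp_label_right G2.vout)).trans h2.output

end SeqComp

section Branch

variable {sp jn : Label} {d1 d2 : Split}

theorem branch_label_split : (branch sp jn d1 d2 G1 G2).label 0 = sp := rfl

theorem branch_label_left {i : ℕ} (hi : i < G1.n) :
    (branch sp jn d1 d2 G1 G2).label (i + 1) = G1.label i := by
  simp [branch, hi]

theorem branch_label_right {i : ℕ} (hi : i < G2.n) :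
    (branch sp jn d1 d2 G1 G2).label (i + 1 + G1.n) = G2.label i := by
  have hlt : i + 1 + G1.n < G1.n + G2.n + 1 := by omega
  have hge : ¬ i + 1 + G1.n < G1.n + 1 := by omega
  have hsub : i + 1 + G1.n - 1 - G1.n = i := by omega
  simp only [branch, if_neg (show i + 1 + G1.n ≠ 0 by omega), if_neg hge, if_pos hlt, hsub]

theorem branch_label_join : (branch sp jn d1 d2 G1 G2).label (G1.n + G2.n + 1) = jn := by
  simp [branch]

theorem forall_mem_edges_branch {P : ℕ → ℕ → Prop} :
    (∀ u v, (u, v) ∈ (branch sp jn d1 d2 G1 G2).edges → P u v) ↔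
      (∀ u v, (u, v) ∈ G1.edges → P (u + 1) (v + 1)) ∧
      (∀ u v, (u, v) ∈ G2.edges → P (u + 1 + G1.n) (v + 1 + G1.n)) ∧
      (d1 = .plus → P 0 (G1.vin + 1)) ∧
      (d2 = .plus → P 0 (G2.vin + 1 + G1.n)) ∧
      P (G1.vout + 1) (G1.n + G2.n + 1) ∧
      P (G2.vout + 1 + G1.n) (G1.n + G2.n + 1) := by
  simp only [branch, List.mem_append, List.mem_map, List.mem_ite_nil_right, List.mem_cons,
    List.not_mem_nil, or_false, Prod.exists, Prod.mk.injEq]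
  grind

theorem Bounded.branch (h1 : G1.Bounded) (h2 : G2.Bounded) :
    (DFG.branch sp jn d1 d2 G1 G2).Bounded where
  vin_lt := Nat.succ_pos _
  vout_lt := Nat.lt_succ_self _
  edge_lt := by
    obtain ⟨hin1, hout1, hedge1⟩ := h1
    obtain ⟨hin2, hout2, hedge2⟩ := h2
    have hn : (DFG.branch sp jn d1 d2 G1 G2).n = G1.n + G2.n + 2 := rfl
    refine forall_mem_edges_branch.2 ⟨fun u v huv => ?_, fun u v huv => ?_, ?_⟩
    · have := hedge1 u v huv
      omega
    · have := hedge2 u v huv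
      omega
    · omega

theorem TauSound.branch {e e1 e2 : Evidence}
    (hsp_init : sp.initTamper ⊆ tau sp.evid) (hsp : sp.stepTamper (tau e) ⊆ tau sp.evid)
    (h1 : G1.TauSound (splitEv d1 sp.evid) e1) (h2 : G2.TauSound (splitEv d2 sp.evid) e2)
    (hjn_init : jn.initTamper ⊆ tau jn.evid) (hjn1 : jn.stepTamper (tau e1) ⊆ tau jn.evid)
    (hjn2 : jn.stepTamper (tau e2) ⊆ tau jn.evid) :
    (DFG.branch sp jn d1 d2 G1 G2).TauSound e jn.evid where
  toBounded := h1.toBounded.branch h2.toBounded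
  source v := by
    simp only [DFG.branch]
    split_ifs
    exacts [hsp_init, h1.source _, h2.source _, hjn_init]
  edge := by
    refine forall_mem_edges_branch.2
      ⟨fun u v huv => ?left, fun u v huv => ?right, ?splitLeft, ?splitRight, ?joinLeft, ?joinRight⟩
    case left =>
      obtain ⟨hu, hv⟩ := h1.edge_lt u v huv
      simpa only [branch_label_left hu, branch_label_left hv] using h1.edge u v huv
    case right =>
      obtain ⟨hu, hv⟩ := h2.edge_lt u v huv
      simpa only [branch_label_right hu, branch_label_right hv] using h2.edge u v huv
    case splitLeft =>
      rintro rfl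
      simpa only [branch_label_split, splitEv, branch_label_left h1.vin_lt] using h1.input
    case splitRight =>
      rintro rfl
      simpa only [branch_label_split, splitEv, branch_label_right h2.vin_lt] using h2.input
    case joinLeft =>
      simpa only [branch_label_left h1.vout_lt, branch_label_join, h1.output] using hjn1
    case joinRight =>
      simpa only [branch_label_right h2.vout_lt, branch_label_join, h2.output] using hjn2
  input := hsp
  output := congrArg Label.evid branch_label_join

end Branch

end DFG

theorem tauSound_sem (t : Phrase) (p : Place) (φ : List ℕ) (e : Evidence) :
    (sem t p φ e).TauSound e (eval t p φ e) := by
  induction t generalizing p φ e with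
  | meas m q s => exact .single subset_rfl (Set.subset_univ _)
  | copy | sign | hash => exact .single (Set.empty_subset _) subset_rfl
  | att q t ih =>
    exact .seqComp (.single (Set.empty_subset _) subset_rfl)
      (.seqComp (ih q (1 :: φ) e) (.single (Set.empty_subset _) subset_rfl))
  | lseq t1 t2 ih1 ih2 => exact .seqComp (ih1 _ _ _) (ih2 _ _ _)
  | bseq d1 d2 t1 t2 ih1 ih2 | bpar d1 d2 t1 t2 ih1 ih2 =>
    exact .branch (Set.empty_subset _) subset_rfl (ih1 _ _ _) (ih2 _ _ _)
      (Set.empty_subset _) Set.subset_union_left Set.subset_union_right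

end Copland

open Copland in
theorem ts_subset_tau_general (t : Phrase) (p : Place) (φ : List ℕ) (e : Evidence)
    (π : List ℕ) (hπ : (sem t p φ e).IsPath π) :
    ∀ vn, π.getLast? = some vn →
      (sem t p φ e).ts π ⊆ tau (((sem t p φ e).label vn).evid) :=
  fun _ hvn => (tauSound_sem t p φ e).ts_subset hπ.2.2 hvn

open Copland in
/-- Tamper sets are overapproximated by tamper places: if `π = ⟨v1,…,vn⟩` is a
path of `D = C(t,p,φ,e)` starting with a measurement event, then
`ts(π) ⊆ τ(ε(vn))`. -/
theorem ts_subset_tau (t : Phrase) (p : Place) (φ : List ℕ) (e : Evidence)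
    (π : List ℕ) (hπ : (sem t p φ e).IsPath π)
    (hm : ∀ v, π.head? = some v → ((sem t p φ e).label v).IsMeas) :
    ∀ vn, π.getLast? = some vn →
      (sem t p φ e).ts π ⊆ tau (((sem t p φ e).label vn).evid) :=
  ts_subset_tau_general t p φ e π hπ
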